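/- Let V = ℂ ⊗_ℝ ℍ (a complex vector space of dimension 4 via the left tensor factor) and let L be the ℤ-span in V of 1⊗1, 1⊗i, 1⊗j, 1⊗k, I⊗1, I⊗i, I⊗j, I⊗k, where I ∈ ℂ is the imaginary unit and i, j, k are the quaternion units. Then the ring R of ℂ-linear endomorphisms f of V with f(L) ⊆ L is a free ℤ-module of rank exactly 32 = 2·4². -/

import Mathlib

open scoped TensorProduct Quaternion

/-- The quaternion unit `i`. -/
def qi : ℍ[ℝ] := ⟨0, 1, 0, 0⟩
/-- The quaternion unit `j`. -/
def qj : ℍ[ℝ] := ⟨0, 0, 1, 0⟩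
/-- The quaternion unit `k`. -/
def qk : ℍ[ℝ] := ⟨0, 0, 0, 1⟩

/-- The eight generators `1⊗1, 1⊗i, 1⊗j, 1⊗k, I⊗1, I⊗i, I⊗j, I⊗k`
of the integral lattice in `ℂ ⊗[ℝ] ℍ`. -/
noncomputable def latticeGens : Fin 8 → (ℂ ⊗[ℝ] ℍ[ℝ]) :=
  ![(1 : ℂ) ⊗ₜ[ℝ] (1 : ℍ[ℝ]), (1 : ℂ) ⊗ₜ[ℝ] qi, (1 : ℂ) ⊗ₜ[ℝ] qj, (1 : ℂ) ⊗ₜ[ℝ] qk,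
    Complex.I ⊗ₜ[ℝ] (1 : ℍ[ℝ]), Complex.I ⊗ₜ[ℝ] qi, Complex.I ⊗ₜ[ℝ] qj, Complex.I ⊗ₜ[ℝ] qk]

/-- The integral subring lattice `L = ℤ[i] ⊗_ℤ ℍ_ℤ` inside `V = ℂ ⊗[ℝ] ℍ`,
realized as the `ℤ`-span of the eight pure tensors above. -/
noncomputable def L : Submodule ℤ (ℂ ⊗[ℝ] ℍ[ℝ]) :=
  Submodule.span ℤ (Set.range latticeGens)

/-!
Let `Λ` be the `A`-span of a `K`-basis of size `n`. A `K`-linear map may take arbitrary values on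
the basis, and it preserves `Λ` exactly when these values lie in `Λ`: preserving `Λ` can be checked
on `A`-module generators. So the endomorphisms preserving `Λ` form the `A`-module
`Λⁿ ≅ A^(n²)`. The lattice `L` is the `ℤ[i]`-span of the complex basis
`1 ⊗ 1, 1 ⊗ i, 1 ⊗ j, 1 ⊗ k`, and `ℤ[i]` has rank `2` over `ℤ`.
-/

noncomputable section

open Submodule

section LatticeEnd

variable {A K V ι : Type*} [CommRing A] [Ring K] [Algebra A K]
  [AddCommGroup V] [Module A V] [Module K V] [IsScalarTower A K V]

variable (K) in
/-- The `K`-linear endomorphisms of `V` that preserve the `A`-submodule `Λ`. For `K = ℂ` and `Λ` a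
lattice, this is the endomorphism ring of the complex torus `V / Λ`. -/
def latticeEnd (Λ : Submodule A V) : Subalgebra A (Module.End K V) where
  carrier := {f | ∀ x ∈ Λ, f x ∈ Λ}
  mul_mem' hf hg x hx := hf _ (hg x hx)
  add_mem' hf hg x hx := Λ.add_mem (hf x hx) (hg x hx)
  algebraMap_mem' a _ hx := Λ.smul_mem a hx

theorem mem_latticeEnd_span_iff {s : Set V} {f : Module.End K V} :
    f ∈ latticeEnd K (span A s) ↔ ∀ x ∈ s, f x ∈ span A s :=
  span_le (p := (span A s).comap (f.restrictScalars A))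

/-- An endomorphism preserving the `A`-span of a `K`-basis amounts to an arbitrary choice of the
images of the basis vectors in that span. -/
def latticeEndSpanEquiv (b : Module.Basis ι K V) :
    latticeEnd K (span A (Set.range b)) ≃ₗ[A] (ι → span A (Set.range b)) where
  toFun f i := ⟨f.1 (b i), f.2 _ (subset_span ⟨i, rfl⟩)⟩
  map_add' _ _ := rfl
  map_smul' _ _ := rfl
  invFun v := ⟨b.constr A fun i ↦ (v i : V), mem_latticeEnd_span_iff.2 <| by
    rintro _ ⟨i, rfl⟩
    simp⟩
  left_inv f := Subtype.ext <| b.ext fun i ↦ by simp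
  right_inv v := by
    ext i
    simp

variable [FaithfulSMul A K]

/-- The matrix in the basis `b` of an endomorphism preserving its `A`-span, indexed by the column
first and the row second. -/
def latticeEndSpanEquivPi [Finite ι] (b : Module.Basis ι K V) :
    latticeEnd K (span A (Set.range b)) ≃ₗ[A] (ι → ι → A) :=
  latticeEndSpanEquiv b ≪≫ₗ LinearEquiv.piCongrRight fun _ ↦
    (Module.Basis.span (b.linearIndependent.restrict_scalars' A)).equivFun

theorem endomorphism_ring_of_torus_rank_eq_general [Fintype ι] [Module.Free ℤ A]
    [Module.Finite ℤ A] (b : Module.Basis ι K V) :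
    ∃ S : Subring (Module.End K V),
      (S : Set (Module.End K V)) =
        {f : Module.End K V | ∀ x ∈ span A (Set.range b), f x ∈ span A (Set.range b)} ∧
      Module.Free ℤ S ∧
      Module.rank ℤ S = (Module.finrank ℤ A * Fintype.card ι ^ 2 : ℕ) := by
  let E := latticeEnd K (span A (Set.range b))
  let e : E ≃ₗ[ℤ] (ι → ι → A) := (latticeEndSpanEquivPi b).restrictScalars ℤ
  have : Module.Finite ℤ E := .equiv e.symm
  have finrank_E : Module.finrank ℤ E = Module.finrank ℤ A * Fintype.card ι ^ 2 := by
    rw [e.finrank_eq, Module.finrank_pi_fintype]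
    simp only [Module.finrank_pi_fintype, Finset.sum_const, Finset.card_univ, smul_eq_mul]
    ring
  exact ⟨E.toSubring, rfl, .of_equiv e.symm,
    (Module.finrank_eq_rank ℤ E).symm.trans (congrArg Nat.cast finrank_E)⟩

end LatticeEnd

section GaussianLattice

/-- The `ℤ`-basis `1, √d` of `ℤ√d`. -/
def zsqrtdBasis (d : ℤ) : Module.Basis (Fin 2) ℤ (ℤ√d) :=
  .ofEquivFun <| AddEquiv.toIntLinearEquiv
    { toFun z := ![z.re, z.im]
      invFun v := ⟨v 0, v 1⟩
      left_inv _ := rfl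
      right_inv v := by ext i; fin_cases i <;> rfl
      map_add' x y := by ext i; fin_cases i <;> simp }

theorem coe_zsqrtdBasis (d : ℤ) : ⇑(zsqrtdBasis d) = ![1, Zsqrtd.sqrtd] := by
  funext i
  rw [zsqrtdBasis, Module.Basis.coe_ofEquivFun]
  fin_cases i <;> rfl

/-- The ring `ℤ[i]` as a subring of `ℂ`, so that it acts on every complex vector space. -/
abbrev gaussianSubring : Subring ℂ :=
  GaussianInt.toComplex.range

/-- The `ℤ`-basis `1, i` of `ℤ[i]`. -/
def gaussianSubringBasis : Module.Basis (Fin 2) ℤ gaussianSubring :=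
  (zsqrtdBasis (-1)).map <| AddEquiv.toIntLinearEquiv <| RingEquiv.toAddEquiv <|
    .ofBijective GaussianInt.toComplex.rangeRestrict
      ⟨fun _ _ h ↦ GaussianInt.toComplex_injective (congrArg Subtype.val h),
        GaussianInt.toComplex.rangeRestrict_surjective⟩

theorem coe_gaussianSubringBasis (a : Fin 2) :
    (gaussianSubringBasis a : ℂ) = Complex.basisOneI a := by
  have : (gaussianSubringBasis a : ℂ) = GaussianInt.toComplex (zsqrtdBasis (-1) a) := rfl
  rw [this, coe_zsqrtdBasis, Complex.coe_basisOneI]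
  fin_cases a <;> simp [GaussianInt.toComplex_def]

instance : Module.Free ℤ gaussianSubring := .of_basis gaussianSubringBasis

instance : Module.Finite ℤ gaussianSubring := .of_basis gaussianSubringBasis

theorem finrank_gaussianSubring : Module.finrank ℤ gaussianSubring = 2 :=
  Module.finrank_eq_card_basis gaussianSubringBasis

/-- The real basis `1, i, j, k` of `ℍ`. -/
def quaternionBasis : Module.Basis (Fin 4) ℝ ℍ[ℝ] :=
  QuaternionAlgebra.basisOneIJK (-1) 0 (-1)

theorem coe_quaternionBasis : ⇑quaternionBasis = ![1, qi, qj, qk] := by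
  rw [quaternionBasis, QuaternionAlgebra.basisOneIJK]
  refine (Module.Basis.coe_ofEquivFun _).trans (funext fun i ↦ ?_)
  ext <;> fin_cases i <;> simp [qi, qj, qk]

/-- The complex basis `1 ⊗ 1, 1 ⊗ i, 1 ⊗ j, 1 ⊗ k` of `ℂ ⊗[ℝ] ℍ`. -/
def complexQuaternionBasis : Module.Basis (Fin 4) ℂ (ℂ ⊗[ℝ] ℍ[ℝ]) :=
  Algebra.TensorProduct.basis ℂ quaternionBasis

theorem latticeGens_finProdFinEquiv (a : Fin 2) (i : Fin 4) :
    latticeGens (finProdFinEquiv (a, i)) = gaussianSubringBasis a • complexQuaternionBasis i := by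
  rw [complexQuaternionBasis, Algebra.TensorProduct.basis_apply, TensorProduct.smul_tmul',
    Subring.smul_def, smul_eq_mul, mul_one, coe_gaussianSubringBasis, Complex.coe_basisOneI,
    coe_quaternionBasis]
  fin_cases a <;> fin_cases i <;> rfl

open scoped Pointwise in
theorem L_eq_restrictScalars_span :
    L = (span gaussianSubring (Set.range complexQuaternionBasis)).restrictScalars ℤ :=
  calc
    L = span ℤ (Set.range fun p : Fin 2 × Fin 4 ↦ latticeGens (finProdFinEquiv p)) :=
      congrArg (span ℤ) <|
        (EquivLike.range_comp latticeGens (finProdFinEquiv : Fin 2 × Fin 4 ≃ Fin 8)).symm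
    _ = span ℤ (Set.range gaussianSubringBasis • Set.range complexQuaternionBasis) := by
      simp only [Set.range_smul_range, ← latticeGens_finProdFinEquiv]
    _ = _ := span_smul_of_span_eq_top gaussianSubringBasis.span_eq _

end GaussianLattice

end

set_option synthInstance.maxHeartbeats 1000000 in
/-- The ring of `ℂ`-linear endomorphisms of `V = ℂ ⊗[ℝ] ℍ`
(a `4`-dimensional complex vector space) preserving the lattice `L` is a free
`ℤ`-module of rank exactly `32 = 2 · 4²`: it is the endomorphism ring of the
complex torus `S_{𝔹₁,₁,₀} = V / L`. -/
theorem endomorphism_ring_of_torus_rank_eq :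
    ∃ S : Subring (Module.End ℂ (ℂ ⊗[ℝ] ℍ[ℝ])),
      (S : Set (Module.End ℂ (ℂ ⊗[ℝ] ℍ[ℝ]))) =
        {f : Module.End ℂ (ℂ ⊗[ℝ] ℍ[ℝ]) | ∀ x ∈ L, f x ∈ L} ∧
      Module.Free ℤ S ∧ Module.rank ℤ S = 32 := by
  simpa [L_eq_restrictScalars_span, finrank_gaussianSubring] using
    endomorphism_ring_of_torus_rank_eq_general (A := gaussianSubring) complexQuaternionBasis
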